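/- Any 2-edge-coloring of the complete graph K_20 that contains a monochromatic copy of K_5 also contains two vertex-disjoint monochromatic copies of K_4. -/

import Mathlib

/-- `s` is monochromatic under the edge-coloring `c`. -/
def IsMono {N : ℕ} (c : Fin N → Fin N → Bool) (s : Finset (Fin N)) : Prop :=
  ∃ col : Bool, ∀ u ∈ s, ∀ v ∈ s, u ≠ v → c u v = col

/-!
Call the edges of `G` red and those of `Gᶜ` blue, and suppose that any two monochromatic `K₄` meet
although `N` is a red `K₅`. Then the complement of a red `K₄` contains no monochromatic `K₄`, so by
`R(3, 4) ≤ 9` each of its vertices has at most `8` neighbours of either colour inside it. Let `w`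
lie outside `N`, red to all of `N` except possibly `x` and `y`, and blue to `x`. A monochromatic
`K₄` in `Nᶜ ∪ {x, y}` would have to contain `x` and `y`, hence be red, avoid `w` and be disjoint
from the red `K₄` on `w` and `N \ {x, y}`. So `Nᶜ ∪ {x, y}`, which has at least `17` vertices,
contains no monochromatic `K₄`, and all its vertices have exactly `8` neighbours of either colour
in it. If `w` is blue to `y`, it has `8` red neighbours in `Nᶜ`, hence `9` in `Nᶜ ∪ {z}` for any
other `z ∈ N`, too many. If `w` is red to all of `N \ {x}`, then `y` can be varied, so every vertex
outside `N` is joined to all of `N \ {x}` in the same colour; the `7` common red neighbours span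
no blue `K₄`, hence two disjoint red edges, which extend to disjoint red `K₄` through `N \ {x}`.

So a vertex outside `N` with at least three red neighbours in `N` is red to all of `N`. By double
counting such a vertex exists, not only for `N` but for every red clique of size `5, …, 9`; the
clique therefore grows to a red `K₈`, which splits into two red `K₄`.
-/

open Finset SimpleGraph

section NeighborsIn

variable {V : Type*} {G : SimpleGraph V} {s t : Finset V} {v x : V} {n : ℕ}

open scoped Classical in
/-- The neighbourhood of `v` in `G` restricted to the finite set `s`; `v` itself need not lie in
`s`. The number of its elements is the degree of `v` relative to `s`. -/
noncomputable def neighborsIn (G : SimpleGraph V) (s : Finset V) (v : V) : Finset V :=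
  {u ∈ s | G.Adj v u}

@[simp]
lemma mem_neighborsIn {u : V} : u ∈ neighborsIn G s v ↔ u ∈ s ∧ G.Adj v u := by
  simp [neighborsIn]

lemma neighborsIn_subset : neighborsIn G s v ⊆ s :=
  fun _ hu ↦ (mem_neighborsIn.1 hu).1

lemma neighborsIn_insert_of_not_adj [DecidableEq V] (h : ¬G.Adj v x) :
    neighborsIn G (insert x s) v = neighborsIn G s v := by
  ext u
  simp only [mem_neighborsIn, mem_insert]
  grind

lemma card_neighborsIn_insert_of_adj [DecidableEq V] (hx : x ∉ s) (h : G.Adj v x) :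
    #(neighborsIn G (insert x s) v) = #(neighborsIn G s v) + 1 := by
  have insert_eq : neighborsIn G (insert x s) v = insert x (neighborsIn G s v) := by
    ext u
    simp only [mem_neighborsIn, mem_insert]
    grind
  rw [insert_eq, card_insert_of_notMem (by simp [hx])]

lemma card_neighborsIn_add_card_neighborsIn_compl (G : SimpleGraph V) (hv : v ∈ s) :
    #(neighborsIn G s v) + #(neighborsIn Gᶜ s v) + 1 = #s := by
  classical
  have hdisj : Disjoint (neighborsIn G s v) (neighborsIn Gᶜ s v) := by
    simp +contextual [Finset.disjoint_left]
  have hunion : neighborsIn G s v ∪ neighborsIn Gᶜ s v = s.erase v := by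
    ext u
    have := G.ne_of_adj (a := v) (b := u)
    simp only [mem_union, mem_neighborsIn, compl_adj, mem_erase]
    tauto
  rw [← card_union_of_disjoint hdisj, hunion, card_erase_add_one hv]

lemma exists_even_card_neighborsIn (G : SimpleGraph V) (hs : Odd #s) :
    ∃ v ∈ s, Even #(neighborsIn G s v) := by
  classical
  by_contra! hodd
  have degree_eq (v : (s : Set V)) : (G.induce (s : Set V)).degree v = #(neighborsIn G s v) := by
    rw [← card_neighborFinset_eq_degree, ← card_map (Function.Embedding.subtype _)]
    congr 1
    ext u
    simp [and_comm]
  have heven := (G.induce (s : Set V)).even_card_odd_degree_vertices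
  rw [filter_true_of_mem fun v _ ↦ by
    rw [degree_eq]; exact Nat.not_even_iff_odd.1 (hodd v v.2), card_univ] at heven
  simp only [coe_sort_coe, Fintype.card_coe] at heven
  exact Nat.not_even_iff_odd.2 hs heven

lemma cliqueFreeOn_neighborsIn (hG : G.CliqueFreeOn s (n + 1)) (hv : v ∈ s) :
    G.CliqueFreeOn (neighborsIn G s v) n :=
  (hG.of_succ _ (mem_coe.2 hv)).subset _ fun _ hu ↦ mem_neighborsIn.1 (mem_coe.1 hu)

lemma card_mul_le_card_mul_of_card_neighborsIn {m : ℕ} (hm : ∀ x ∈ s, m ≤ #(neighborsIn G t x))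
    (hn : ∀ y ∈ t, #(neighborsIn G s y) ≤ n) : #s * m ≤ #t * n := by
  classical
  refine card_mul_le_card_mul G.Adj (fun x hx ↦ ?_) (fun y hy ↦ ?_)
  · convert hm x hx
    ext u
    simp
  · convert hn y hy
    ext u
    simp [G.adj_comm]

end NeighborsIn

section Clique

variable {V : Type*} {G : SimpleGraph V} {s t Q : Finset V} {m n : ℕ}

lemma exists_subset_isNClique (hQ : G.IsClique Q) (hn : n ≤ #Q) : ∃ t ⊆ Q, G.IsNClique n t :=
  let ⟨t, htQ, ht⟩ := exists_subset_card_eq hn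
  ⟨t, htQ, hQ.subset (coe_subset.2 htQ), ht⟩

lemma isNClique_union [DecidableEq V] (hs : G.IsNClique m s) (ht : G.IsNClique n t)
    (hst : ∀ u ∈ s, ∀ v ∈ t, G.Adj u v) : G.IsNClique (m + n) (s ∪ t) := by
  have hdisj : Disjoint s t :=
    Finset.disjoint_left.2 fun u hus hut ↦ G.irrefl (hst u hus u hut)
  refine ⟨?_, by rw [card_union_of_disjoint hdisj, hs.card_eq, ht.card_eq]⟩
  have := G.symm
  rw [coe_union]
  exact Set.pairwise_union_of_symm.2 ⟨hs.isClique, ht.isClique, fun u hu v hv _ ↦ hst u hu v hv⟩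

end Clique

section Ramsey

variable {V : Type*} {G : SimpleGraph V} {s Q : Finset V} {v : V} {a b n p q : ℕ}

/-- The Ramsey bound `R(p, q) ≤ n` for graphs on `V`: a finite set of vertices spanning neither a
`p`-clique of `G` nor a `q`-clique of its complement has fewer than `n` elements. Quantifying over
the finite subsets of one vertex type lets the bound be applied to neighbourhoods. -/
def RamseyBound (V : Type*) (p q n : ℕ) : Prop :=
  ∀ (G : SimpleGraph V) (s : Finset V), G.CliqueFreeOn s p → Gᶜ.CliqueFreeOn s q → #s < n

lemma RamseyBound.symm (h : RamseyBound V p q n) : RamseyBound V q p n :=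
  fun G s hG hGc ↦ h Gᶜ s hGc (by rwa [compl_compl])

lemma ramseyBound_two_left (V : Type*) (q : ℕ) : RamseyBound V 2 q q := by
  intro G s hG hGc
  by_contra! hq
  have hs : Gᶜ.IsClique s := fun u hu v hv huv ↦
    (G.compl_adj u v).2 ⟨huv, (cliqueFreeOn_two _).1 hG hu hv huv⟩
  obtain ⟨t, hts, ht⟩ := exists_subset_isNClique hs hq
  exact hGc (coe_subset.2 hts) ht

lemma RamseyBound.card_neighborsIn_lt (h : RamseyBound V p q n) (hG : G.CliqueFreeOn s (p + 1))
    (hGc : Gᶜ.CliqueFreeOn s q) (hv : v ∈ s) : #(neighborsIn G s v) < n :=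
  h G _ (cliqueFreeOn_neighborsIn hG hv) (hGc.subset _ (coe_subset.2 neighborsIn_subset))

lemma RamseyBound.card_neighborsIn_compl_lt (h : RamseyBound V p q n) (hG : G.CliqueFreeOn s p)
    (hGc : Gᶜ.CliqueFreeOn s (q + 1)) (hv : v ∈ s) : #(neighborsIn Gᶜ s v) < n :=
  h.symm.card_neighborsIn_lt hGc (by rwa [compl_compl]) hv

lemma RamseyBound.succ_succ (ha : RamseyBound V p (q + 1) (a + 1))
    (hb : RamseyBound V (p + 1) q (b + 1)) : RamseyBound V (p + 1) (q + 1) (a + b + 2) := by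
  intro G s hG hGc
  obtain rfl | ⟨v, hv⟩ := s.eq_empty_or_nonempty
  · simp
  have := ha.card_neighborsIn_lt hG hGc hv
  have := hb.card_neighborsIn_compl_lt hG hGc hv
  have := card_neighborsIn_add_card_neighborsIn_compl G hv
  omega

/-- If the bound failed, all degrees in a graph on `a + b + 1` vertices would equal `a`, which the
handshaking lemma forbids. -/
lemma RamseyBound.succ_succ_of_odd (ha : RamseyBound V p (q + 1) (a + 1))
    (hb : RamseyBound V (p + 1) q (b + 1)) (hao : Odd a) (hbo : Odd b) :
    RamseyBound V (p + 1) (q + 1) (a + b + 1) := by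
  intro G s hG hGc
  by_contra! hs
  obtain ⟨t, hts, ht⟩ := exists_subset_card_eq hs
  have hodd : Odd #t := ht ▸ (hao.add_odd hbo).add_one
  obtain ⟨v, hv, heven⟩ := exists_even_card_neighborsIn G hodd
  have hGt : G.CliqueFreeOn t (p + 1) := hG.subset _ (coe_subset.2 hts)
  have hGct : Gᶜ.CliqueFreeOn t (q + 1) := hGc.subset _ (coe_subset.2 hts)
  have degree_eq : #(neighborsIn G t v) = a := by
    have := ha.card_neighborsIn_lt hGt hGct hv
    have := hb.card_neighborsIn_compl_lt hGt hGct hv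
    have := card_neighborsIn_add_card_neighborsIn_compl G hv
    omega
  rw [degree_eq] at heven
  exact Nat.not_even_iff_odd.2 hao heven

lemma ramseyBound_three_three (V : Type*) : RamseyBound V 3 3 6 :=
  (ramseyBound_two_left V 3).succ_succ (ramseyBound_two_left V 3).symm

lemma ramseyBound_three_four (V : Type*) : RamseyBound V 3 4 9 :=
  (ramseyBound_two_left V 4).succ_succ_of_odd (ramseyBound_three_three V) (by decide) (by decide)

lemma RamseyBound.exists_isNClique (h : RamseyBound V p q n) (hs : n ≤ #s)
    (hGc : Gᶜ.CliqueFreeOn s q) : ∃ t ⊆ s, G.IsNClique p t := by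
  by_contra! hG
  exact (h G s (fun t hts ↦ hG t (coe_subset.1 hts)) hGc).not_ge hs

lemma RamseyBound.exists_disjoint_isNClique (h : RamseyBound V p q n) (hs : n + p ≤ #s)
    (hGc : Gᶜ.CliqueFreeOn s q) :
    ∃ e ⊆ s, ∃ f ⊆ s, G.IsNClique p e ∧ G.IsNClique p f ∧ Disjoint e f := by
  classical
  obtain ⟨e, hes, he⟩ := h.exists_isNClique (by omega) hGc
  have hcard : n ≤ #(s \ e) := by
    rw [card_sdiff_of_subset hes, he.card_eq]
    omega
  obtain ⟨f, hfs, hf⟩ := h.exists_isNClique hcard (hGc.subset _ (coe_subset.2 sdiff_subset))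
  exact ⟨e, hes, f, hfs.trans sdiff_subset, he, hf, disjoint_sdiff.mono_right hfs⟩

lemma exists_disjoint_isNClique_of_isClique (hQ : G.IsClique Q) (hn : n + n ≤ #Q) :
    ∃ e ⊆ Q, ∃ f ⊆ Q, G.IsNClique n e ∧ G.IsNClique n f ∧ Disjoint e f :=
  (ramseyBound_two_left V n).symm.exists_disjoint_isNClique hn <|
    (cliqueFreeOn_two _).2 fun _ hu _ hv huv h ↦ ((G.compl_adj _ _).1 h).2 (hQ hu hv huv)

end Ramsey

section MonoClique

variable {V : Type*} {G : SimpleGraph V} {s t Q R : Finset V} {v : V} {n : ℕ}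

/-- A monochromatic copy of `K_n` with vertex set `s`, for the 2-edge-coloring whose colour classes
are the edges of `G` and those of `Gᶜ`. -/
def IsMonoNClique (G : SimpleGraph V) (n : ℕ) (s : Finset V) : Prop :=
  G.IsNClique n s ∨ Gᶜ.IsNClique n s

/-- The set `s` contains no monochromatic copy of `K_n`; the analogue of
`SimpleGraph.CliqueFreeOn` for both colours at once. -/
def MonoCliqueFreeOn (G : SimpleGraph V) (s : Finset V) (n : ℕ) : Prop :=
  ∀ t ⊆ s, ¬IsMonoNClique G n t

/-- Any two monochromatic copies of `K_n` share a vertex, the negation of the conclusion of the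
theorem. -/
def MonoCliquesIntersect (G : SimpleGraph V) (n : ℕ) : Prop :=
  ∀ s t, IsMonoNClique G n s → IsMonoNClique G n t → ¬Disjoint s t

lemma isMonoNClique_compl : IsMonoNClique Gᶜ n s ↔ IsMonoNClique G n s := by
  rw [IsMonoNClique, IsMonoNClique, compl_compl, or_comm]

lemma MonoCliqueFreeOn.mono (h : MonoCliqueFreeOn G t n) (hst : s ⊆ t) : MonoCliqueFreeOn G s n :=
  fun u hus ↦ h u (hus.trans hst)

lemma MonoCliqueFreeOn.compl (h : MonoCliqueFreeOn G s n) : MonoCliqueFreeOn Gᶜ s n :=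
  fun t hts ht ↦ h t hts (isMonoNClique_compl.1 ht)

lemma MonoCliqueFreeOn.cliqueFreeOn (h : MonoCliqueFreeOn G s n) : G.CliqueFreeOn s n :=
  fun t hts ht ↦ h t (coe_subset.1 hts) (.inl ht)

lemma MonoCliqueFreeOn.card_neighborsIn_le_eight (h : MonoCliqueFreeOn G s 4) (hv : v ∈ s) :
    #(neighborsIn G s v) ≤ 8 :=
  Nat.le_of_lt_succ <|
    (ramseyBound_three_four V).card_neighborsIn_lt h.cliqueFreeOn h.compl.cliqueFreeOn hv

lemma MonoCliqueFreeOn.card_le_card_neighborsIn_add (h : MonoCliqueFreeOn G s 4) (hv : v ∈ s) :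
    #s ≤ #(neighborsIn G s v) + 9 := by
  have := h.compl.card_neighborsIn_le_eight hv
  have := card_neighborsIn_add_card_neighborsIn_compl G hv
  omega

lemma MonoCliqueFreeOn.card_neighborsIn_eq_eight (h : MonoCliqueFreeOn G s 4) (hs : 17 ≤ #s)
    (hv : v ∈ s) : #(neighborsIn G s v) = 8 := by
  have := h.card_neighborsIn_le_eight hv
  have := h.card_le_card_neighborsIn_add hv
  omega

lemma MonoCliquesIntersect.card_lt_six_of_forall_adj (h : MonoCliquesIntersect G 4)
    (hQ : G.IsNClique 4 Q) (hR : Gᶜ.CliqueFreeOn R 4) (hQR : ∀ u ∈ Q, ∀ v ∈ R, G.Adj u v) :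
    #R < 6 := by
  classical
  by_contra! hR6
  obtain ⟨e, heQ, e', heQ', he, he', hee'⟩ :=
    exists_disjoint_isNClique_of_isClique (n := 2) hQ.isClique hQ.card_eq.ge
  obtain ⟨f, hfR, f', hfR', hf, hf', hff'⟩ :=
    (ramseyBound_two_left V 4).exists_disjoint_isNClique hR6 hR
  have hdisj : Disjoint Q R := Finset.disjoint_left.2 fun u huQ huR ↦ G.irrefl (hQR u huQ u huR)
  refine h _ _ (.inl (isNClique_union he hf fun u hu v hv ↦ hQR u (heQ hu) v (hfR hv)))
    (.inl (isNClique_union he' hf' fun u hu v hv ↦ hQR u (heQ' hu) v (hfR' hv))) ?_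
  simp only [disjoint_union_left, disjoint_union_right]
  exact ⟨⟨hee', (hdisj.mono heQ' hfR).symm⟩, hdisj.mono heQ hfR', hff'⟩

end MonoClique

section Intersecting

variable {V : Type*} [Fintype V] {G : SimpleGraph V} {N Q : Finset V}
  {u w x y : V} {n : ℕ}

section Complement

variable [DecidableEq V]

lemma MonoCliquesIntersect.monoCliqueFreeOn_compl (h : MonoCliquesIntersect G n)
    (hQ : G.IsClique Q) (hn : n ≤ #Q) : MonoCliqueFreeOn G Qᶜ n := by
  obtain ⟨t, htQ, ht⟩ := exists_subset_isNClique hQ hn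
  exact fun s hs hsmono ↦ h s t hsmono (.inl ht) (disjoint_compl_left.mono hs htQ)

lemma MonoCliquesIntersect.monoCliqueFreeOn_insert_compl (h : MonoCliquesIntersect G n)
    (hQ : G.IsClique Q) (hn : n + 1 ≤ #Q) (hx : x ∈ Q) : MonoCliqueFreeOn G (insert x Qᶜ) n := by
  rw [← compl_erase]
  refine h.monoCliqueFreeOn_compl (hQ.subset (coe_subset.2 (erase_subset x Q))) ?_
  rw [card_erase_of_mem hx]
  omega

lemma MonoCliquesIntersect.monoCliqueFreeOn_insert_insert_compl (h : MonoCliquesIntersect G n)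
    (hN : G.IsNClique (n + 1) N) (hx : x ∈ N) (hy : y ∈ N) (hxy : x ≠ y) (hw : w ∉ N)
    (hwx : ¬G.Adj w x) (hwz : ∀ z ∈ N, z ≠ x → z ≠ y → G.Adj w z) :
    MonoCliqueFreeOn G (insert y (insert x Nᶜ)) n := by
  intro T hTsub hT
  have mem_of_subset {z z' : V} (hz : z ∈ N) (hsub : T ⊆ insert z' (insert z Nᶜ)) : z' ∈ T := by
    by_contra hz'
    exact h.monoCliqueFreeOn_insert_compl hN.isClique hN.card_eq.ge hz T
      ((subset_insert_iff_of_notMem hz').1 hsub) hT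
  have hyT : y ∈ T := mem_of_subset hx hTsub
  have hxT : x ∈ T := mem_of_subset hy (by rwa [insert_comm])
  have hTred : G.IsNClique n T := hT.resolve_right fun hTblue ↦
    ((G.compl_adj x y).1 (hTblue.isClique hxT hyT hxy)).2 (hN.isClique hx hy hxy)
  have hwT : w ∉ T := fun hwT ↦ hwx (hTred.isClique hwT hxT (by rintro rfl; exact hw hx))
  have hW : G.IsNClique n (insert w ((N.erase x).erase y)) :=
    (hN.erase_of_mem hx).insert_erase (by simpa using fun z hzx hz hzy ↦ hwz z hz hzx hzy)
      (mem_erase.2 ⟨hxy.symm, hy⟩)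
  refine h _ _ hT (.inl hW) (disjoint_insert_right.2 ⟨hwT, ?_⟩)
  rwa [← subset_compl_iff_disjoint_right, compl_erase, compl_erase]

lemma card_insert_insert_compl_add_card (hx : x ∈ N) (hy : y ∈ N) (hxy : x ≠ y) :
    #(insert y (insert x Nᶜ)) + #N = Fintype.card V + 2 := by
  rw [card_insert_of_notMem (by simp [hxy.symm, hy]), card_insert_of_notMem (by simp [hx]),
    ← card_compl_add_card N]
  omega

lemma MonoCliquesIntersect.card_neighborsIn_insert_insert_compl (h : MonoCliquesIntersect G 4)
    (hV : 20 ≤ Fintype.card V) (hN : G.IsNClique 5 N) (hx : x ∈ N) (hy : y ∈ N) (hxy : x ≠ y)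
    (hw : w ∉ N) (hwx : ¬G.Adj w x) (hwz : ∀ z ∈ N, z ≠ x → z ≠ y → G.Adj w z)
    (hu : u ∈ insert y (insert x Nᶜ)) : #(neighborsIn G (insert y (insert x Nᶜ)) u) = 8 := by
  have hcard := card_insert_insert_compl_add_card hx hy hxy
  rw [hN.card_eq] at hcard
  exact (h.monoCliqueFreeOn_insert_insert_compl hN hx hy hxy hw hwx
    hwz).card_neighborsIn_eq_eight (by omega) hu

end Complement

lemma MonoCliquesIntersect.exists_not_adj_of_not_adj_of_not_adj (h : MonoCliquesIntersect G 4)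
    (hV : 20 ≤ Fintype.card V) (hN : G.IsNClique 5 N) (hw : w ∉ N) (hx : x ∈ N) (hy : y ∈ N)
    (hxy : x ≠ y) (hwx : ¬G.Adj w x) (hwy : ¬G.Adj w y) :
    ∃ z ∈ N, z ≠ x ∧ z ≠ y ∧ ¬G.Adj w z := by
  classical
  by_contra! hwz
  have degree_eq : #(neighborsIn G Nᶜ w) = 8 := by
    rw [← neighborsIn_insert_of_not_adj hwx, ← neighborsIn_insert_of_not_adj hwy]
    exact h.card_neighborsIn_insert_insert_compl hV hN hx hy hxy hw hwx hwz (by simp [hw])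
  obtain ⟨z, hz, hzxy⟩ : ∃ z ∈ N, z ∉ ({x, y} : Finset V) :=
    exists_mem_notMem_of_card_lt_card (by rw [hN.card_eq]; exact card_le_two.trans_lt (by simp))
  simp only [mem_insert, mem_singleton, not_or] at hzxy
  have degree_le := (h.monoCliqueFreeOn_insert_compl hN.isClique hN.card_eq.ge
    hz).card_neighborsIn_le_eight (v := w) (by simp [hw])
  rw [card_neighborsIn_insert_of_adj (by simpa using hz) (hwz z hz hzxy.1 hzxy.2)] at degree_le
  omega

lemma MonoCliquesIntersect.exists_ne_not_adj_of_not_adj (h : MonoCliquesIntersect G 4)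
    (hV : 20 ≤ Fintype.card V) (hN : G.IsNClique 5 N) (hw : w ∉ N) (hx : x ∈ N)
    (hwx : ¬G.Adj w x) : ∃ y ∈ N, y ≠ x ∧ ¬G.Adj w y := by
  classical
  by_contra! hwz
  have degree_eq {y u : V} (hy : y ∈ N) (hyx : y ≠ x) (hu : u ∈ insert y (insert x Nᶜ)) :
      #(neighborsIn G (insert y (insert x Nᶜ)) u) = 8 :=
    h.card_neighborsIn_insert_insert_compl hV hN hx hy hyx.symm hw hwx
      (fun z hz hzx _ ↦ hwz z hz hzx) hu
  have notMem {y : V} (hy : y ∈ N) (hyx : y ≠ x) : y ∉ insert x Nᶜ := by simp [hyx, hy]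
  -- Otherwise `u` would have different degrees in the two sets `Nᶜ ∪ {x, y}` and `Nᶜ ∪ {x, y'}`.
  have adj_of_adj {y y' u : V} (hy : y ∈ N) (hyx : y ≠ x) (hy' : y' ∈ N) (hyx' : y' ≠ x)
      (hu : u ∉ N) (huy : G.Adj u y) : G.Adj u y' := by
    by_contra huy'
    have hdeg := degree_eq hy hyx (u := u) (by simp [hu])
    have hdeg' := degree_eq hy' hyx' (u := u) (by simp [hu])
    rw [card_neighborsIn_insert_of_adj (notMem hy hyx) huy] at hdeg
    rw [neighborsIn_insert_of_not_adj huy'] at hdeg'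
    omega
  obtain ⟨y, hy, hyx⟩ := exists_mem_ne (by rw [hN.card_eq]; norm_num) x
  have card_eq_seven : #(neighborsIn G Nᶜ y) = 7 := by
    have hdeg := degree_eq hy hyx (mem_insert_self y _)
    rw [neighborsIn_insert_of_not_adj (G.irrefl),
      card_neighborsIn_insert_of_adj (by simpa using hx) (hN.isClique hy hx hyx)] at hdeg
    omega
  have hfree : MonoCliqueFreeOn G Nᶜ 4 :=
    h.monoCliqueFreeOn_compl hN.isClique (by rw [hN.card_eq]; norm_num)
  have card_lt_six : #(neighborsIn G Nᶜ y) < 6 := by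
    refine h.card_lt_six_of_forall_adj (hN.erase_of_mem hx)
      (hfree.mono neighborsIn_subset).compl.cliqueFreeOn fun y' hy' u hu ↦ ?_
    obtain ⟨huN, hyu⟩ := mem_neighborsIn.1 hu
    obtain ⟨hyx', hy'⟩ := mem_erase.1 hy'
    exact (adj_of_adj hy hyx hy' hyx' (mem_compl.1 huN) hyu.symm).symm
  omega

lemma MonoCliquesIntersect.adj_of_three_le_card_neighborsIn (h : MonoCliquesIntersect G 4)
    (hV : 20 ≤ Fintype.card V) (hN : G.IsNClique 5 N) (hw : w ∉ N)
    (h3 : 3 ≤ #(neighborsIn G N w)) : ∀ z ∈ N, G.Adj w z := by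
  classical
  intro x hx
  by_contra hwx
  obtain ⟨y, hy, hyx, hwy⟩ := h.exists_ne_not_adj_of_not_adj hV hN hw hx hwx
  obtain ⟨z, hz, hzx, hzy, hwz⟩ :=
    h.exists_not_adj_of_not_adj_of_not_adj hV hN hw hx hy hyx.symm hwx hwy
  have hsub : neighborsIn G N w ⊆ N \ {x, y, z} := by
    intro u hu
    simp only [mem_neighborsIn, mem_sdiff, mem_insert, mem_singleton] at hu ⊢
    grind
  have hcard : #(N \ {x, y, z}) = 2 := by
    rw [card_sdiff_of_subset (by simp [insert_subset_iff, hx, hy, hz]), hN.card_eq,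
      card_eq_three.2 ⟨x, y, z, hyx.symm, hzx.symm, hzy.symm, rfl⟩]
  have := card_le_card hsub
  omega

lemma MonoCliquesIntersect.adj_of_three_le_card_neighborsIn_of_isClique
    (h : MonoCliquesIntersect G 4) (hV : 20 ≤ Fintype.card V) (hQ : G.IsClique Q) (h5 : 5 ≤ #Q)
    (hw : w ∉ Q) (h3 : 3 ≤ #(neighborsIn G Q w)) : ∀ z ∈ Q, G.Adj w z := by
  classical
  intro z hz
  obtain ⟨T, hTsub, hT⟩ := exists_subset_card_eq h3
  obtain ⟨N, hzTN, hNQ, hN⟩ := exists_subsuperset_card_eq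
    (insert_subset hz (hTsub.trans neighborsIn_subset))
    ((card_insert_le z T).trans (by omega)) h5
  obtain ⟨hzN, hTN⟩ := insert_subset_iff.1 hzTN
  have hTw : T ⊆ neighborsIn G N w := fun u hu ↦
    mem_neighborsIn.2 ⟨hTN hu, (mem_neighborsIn.1 (hTsub hu)).2⟩
  exact h.adj_of_three_le_card_neighborsIn hV ⟨hQ.subset (coe_subset.2 hNQ), hN⟩
    (fun hwN ↦ hw (hNQ hwN)) (hT ▸ card_le_card hTw) z hzN

lemma MonoCliquesIntersect.exists_three_le_card_neighborsIn (h : MonoCliquesIntersect G 4)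
    (hV : 20 ≤ Fintype.card V) (hQ : G.IsClique Q) (h5 : 5 ≤ #Q) (h9 : #Q ≤ 9) :
    ∃ w ∉ Q, 3 ≤ #(neighborsIn G Q w) := by
  classical
  by_contra! hfew
  have hout : ∀ x ∈ Q, Fintype.card V - #Q - 8 ≤ #(neighborsIn G Qᶜ x) := by
    intro x hx
    have hle := (h.monoCliqueFreeOn_insert_compl hQ h5 hx).card_le_card_neighborsIn_add
      (mem_insert_self x _)
    rw [card_insert_of_notMem (by simpa using hx), card_compl,
      neighborsIn_insert_of_not_adj G.irrefl] at hle
    omega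
  have hcount : #Q * (Fintype.card V - #Q - 8) ≤ (Fintype.card V - #Q) * 2 := by
    rw [← card_compl] at hout ⊢
    exact card_mul_le_card_mul_of_card_neighborsIn hout
      fun w hw ↦ Nat.le_of_lt_succ (hfew w (mem_compl.1 hw))
  generalize #Q = k at *
  interval_cases k <;> omega

lemma MonoCliquesIntersect.exists_isNClique_succ (h : MonoCliquesIntersect G 4)
    (hV : 20 ≤ Fintype.card V) (h5 : 5 ≤ n) (h9 : n ≤ 9) (hQ : G.IsNClique n Q) :
    ∃ Q', G.IsNClique (n + 1) Q' := by
  classical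
  obtain ⟨w, hwQ, h3⟩ := h.exists_three_le_card_neighborsIn hV hQ.isClique
    (h5.trans hQ.card_eq.ge) (hQ.card_eq.le.trans h9)
  exact ⟨insert w Q, hQ.insert <|
    h.adj_of_three_le_card_neighborsIn_of_isClique hV hQ.isClique (h5.trans hQ.card_eq.ge) hwQ h3⟩

lemma MonoCliquesIntersect.cliqueFree_five (h : MonoCliquesIntersect G 4)
    (hV : 20 ≤ Fintype.card V) : G.CliqueFree 5 := by
  intro N hN
  obtain ⟨Q₆, hQ₆⟩ := h.exists_isNClique_succ hV (by norm_num) (by norm_num) hN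
  obtain ⟨Q₇, hQ₇⟩ := h.exists_isNClique_succ hV (by norm_num) (by norm_num) hQ₆
  obtain ⟨Q₈, hQ₈⟩ := h.exists_isNClique_succ hV (by norm_num) (by norm_num) hQ₇
  obtain ⟨s, -, t, -, hs, ht, hst⟩ :=
    exists_disjoint_isNClique_of_isClique (n := 4) hQ₈.isClique hQ₈.card_eq.ge
  exact h s t (.inl hs) (.inl ht) hst

end Intersecting

section Coloring

variable {k n : ℕ} {c : Fin k → Fin k → Bool} {s : Finset (Fin k)}

/-- The graph of the edges of colour `true` in a 2-edge-coloring; its complement is the graph of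
the edges of colour `false`. The diagonal values of `c` are discarded. -/
def trueGraph (c : Fin k → Fin k → Bool) (hsymm : ∀ u v, c u v = c v u) :
    SimpleGraph (Fin k) where
  Adj u v := u ≠ v ∧ c u v = true
  symm := ⟨fun u v h ↦ ⟨h.1.symm, hsymm u v ▸ h.2⟩⟩
  loopless := ⟨fun _ h ↦ h.1 rfl⟩

lemma isMonoNClique_trueGraph (hsymm : ∀ u v, c u v = c v u) :
    IsMonoNClique (trueGraph c hsymm) n s ↔ #s = n ∧ IsMono c s := by
  have htrue : (trueGraph c hsymm).IsClique s ↔ ∀ u ∈ s, ∀ v ∈ s, u ≠ v → c u v = true := by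
    simp +contextual [isClique_iff, Set.Pairwise, trueGraph]
  have hfalse : (trueGraph c hsymm)ᶜ.IsClique s ↔ ∀ u ∈ s, ∀ v ∈ s, u ≠ v → c u v = false := by
    simp +contextual [isClique_iff, Set.Pairwise, trueGraph]
  rw [IsMonoNClique, isNClique_iff, isNClique_iff, htrue, hfalse, ← or_and_right, and_comm,
    IsMono, Bool.exists_bool, or_comm]

end Coloring

theorem two_disjoint_mono_K4_of_mono_K5_general {V : Type*} [Fintype V] (G : SimpleGraph V)
    (hV : 20 ≤ Fintype.card V) (hK5 : ∃ N, IsMonoNClique G 5 N) :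
    ∃ s₁ s₂, IsMonoNClique G 4 s₁ ∧ IsMonoNClique G 4 s₂ ∧ Disjoint s₁ s₂ := by
  classical
  obtain ⟨N, hN⟩ := hK5
  wlog hred : G.IsNClique 5 N generalizing G
  · simpa only [isMonoNClique_compl] using
      this Gᶜ (isMonoNClique_compl.2 hN) (hN.resolve_left hred)
  by_contra! hno
  have h : MonoCliquesIntersect G 4 := hno
  exact h.cliqueFree_five hV N hred

/-- any 2-edge-coloring of `K_20` containing a monochromatic `K_5`
contains two vertex-disjoint monochromatic copies of `K_4`. -/
theorem two_disjoint_mono_K4_of_mono_K5 (c : Fin 20 → Fin 20 → Bool)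
    (hsymm : ∀ u v, c u v = c v u)
    (hK5 : ∃ N : Finset (Fin 20), N.card = 5 ∧ IsMono c N) :
    ∃ s₁ s₂ : Finset (Fin 20), s₁.card = 4 ∧ s₂.card = 4 ∧
      IsMono c s₁ ∧ IsMono c s₂ ∧ Disjoint s₁ s₂ := by
  obtain ⟨s₁, s₂, h₁, h₂, hdisj⟩ := two_disjoint_mono_K4_of_mono_K5_general (trueGraph c hsymm)
    (by simp) (by simpa only [isMonoNClique_trueGraph] using hK5)
  rw [isMonoNClique_trueGraph] at h₁ h₂
  exact ⟨s₁, s₂, h₁.1, h₂.1, h₁.2, h₂.2, hdisj⟩
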